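/- Let $V$ be a Lie algebra over a field $\mathbb{K}$ of characteristic zero, with universal enveloping algebra $U(V)$ and canonical filtration $U(V)^{\leq n}$ by images of $T^{\leq n}V = \bigoplus_{m=0}^n V^{\otimes m}$. Then for each $n \geq 0$ there is a short exact sequence of vector spaces $0 \to U(V)^{\leq n} \to U(V)^{\leq n+1} \to S^{n+1}(V) \to 0$, where $S^{n+1}(V) = V^{\otimes n+1}/\Sigma_{n+1}$ is the $(n+1)$-st symmetric power (coinvariants of the permutation action). -/

import Mathlib

/-- The canonical (PBW) filtration of the universal enveloping algebra: `ueaFiltration K L n`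
is the span of products of at most `n` elements in the image of `ι : L → U(L)`. -/
def ueaFiltration (K L : Type*) [Field K] [LieRing L] [LieAlgebra K L] (n : ℕ) :
    Submodule K (UniversalEnvelopingAlgebra K L) :=
  Submodule.span K {x | ∃ (m : ℕ) (f : Fin m → L), m ≤ n ∧
    x = (List.ofFn fun i =>
      (UniversalEnvelopingAlgebra.ι K (f i) : UniversalEnvelopingAlgebra K L)).prod}

/-- The submodule of the `(n+1)`-st tensor power spanned by `f₁⊗⋯⊗f_{n+1} - f_{σ1}⊗⋯⊗f_{σ(n+1)}`,
so that the quotient is the symmetric power `S^{n+1}(L)` (coinvariants of `Σ_{n+1}`). -/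
def symRelSpan (K L : Type*) [Field K] [LieRing L] [LieAlgebra K L] (n : ℕ) :
    Submodule K (TensorPower K (n + 1) L) :=
  Submodule.span K {x | ∃ (σ : Equiv.Perm (Fin (n + 1))) (f : Fin (n + 1) → L),
    x = PiTensorProduct.tprod K f - PiTensorProduct.tprod K (f ∘ σ)}

set_option linter.unusedSectionVars false
set_option linter.unusedSimpArgs false
namespace PBWProof
open MvPolynomial

section action
variable {K L I : Type*} [Field K] [LieRing L] [LieAlgebra K L] [LinearOrder I]
  (b : Module.Basis I K L)

lemma basis_ind {P : L → Prop} (zero : P 0) (add : ∀ x y, P x → P y → P (x + y))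
    (smul : ∀ (a : K) x, P x → P (a • x)) (basis : ∀ i, P (b i)) (x : L) : P x := by
  have hx := b.mem_span x
  induction hx using Submodule.span_induction with
  | zero => exact zero
  | add x y _ _ hx hy => exact add x y hx hy
  | smul a x _ hx => exact smul a x hx
  | mem x hx => obtain ⟨i, rfl⟩ := hx; exact basis i

/-- polynomials of degree at most `d` -/
noncomputable def Sle (K I : Type*) [Field K] (d : ℕ) : Submodule K (MvPolynomial I K) :=
  Submodule.span K {p | ∃ J : I →₀ ℕ, J.degree ≤ d ∧ p = monomial J 1}

lemma mono_mem {d : ℕ} {J : I →₀ ℕ} (h : J.degree ≤ d) :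
    (monomial J 1 : MvPolynomial I K) ∈ Sle K I d :=
  Submodule.subset_span ⟨J, h, rfl⟩

lemma Sle_mono {d e : ℕ} (h : d ≤ e) : Sle K I d ≤ Sle K I e := by
  apply Submodule.span_mono
  rintro p ⟨J, hJ, rfl⟩
  exact ⟨J, hJ.trans h, rfl⟩

/-- the linear inclusion of `L` in the polynomials -/
noncomputable def lin : L →ₗ[K] MvPolynomial I K := b.constr K (fun i => X i)

@[simp] lemma lin_b (i : I) : lin b (b i) = X i := by simp [lin]

lemma X_mul_mono (i : I) (J : I →₀ ℕ) :
    (X i * monomial J 1 : MvPolynomial I K) = monomial (Finsupp.single i 1 + J) 1 := by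
  simp [X, monomial_mul]

lemma lin_mul_mem (x : L) {d : ℕ} {p : MvPolynomial I K} (hp : p ∈ Sle K I d) :
    lin b x * p ∈ Sle K I (d + 1) := by
  induction hp using Submodule.span_induction with
  | zero => simp
  | add p q _ _ hp hq => rw [mul_add]; exact add_mem hp hq
  | smul a p _ hp => rw [mul_smul_comm]; exact Submodule.smul_mem _ _ hp
  | mem p hp =>
    obtain ⟨J, hJ, rfl⟩ := hp
    induction x using basis_ind b with
    | zero => simp
    | add x y hx hy => rw [map_add, add_mul]; exact add_mem hx hy
    | smul a x hx => rw [map_smul, smul_mul_assoc]; exact Submodule.smul_mem _ _ hx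
    | basis i =>
      rw [lin_b, X_mul_mono]
      apply mono_mem
      simp only [map_add, Finsupp.degree_single]; omega

/-- `J = j + M` with `j` minimal in `J` and `j < i` -/
def Split (i : I) (J : I →₀ ℕ) (q : I × (I →₀ ℕ)) : Prop :=
  J = Finsupp.single q.1 1 + q.2 ∧ q.1 < i ∧ ∀ k ∈ q.2.support, q.1 ≤ k

lemma Split.unique {i i' : I} {J : I →₀ ℕ} {q r : I × (I →₀ ℕ)} (hq : Split i J q)
    (hr : Split i' J r) : q = r := by
  obtain ⟨j, M⟩ := q
  obtain ⟨k, N⟩ := r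
  obtain ⟨h1, -, h2⟩ := hq
  obtain ⟨h3, -, h4⟩ := hr
  simp only at h1 h2 h3 h4
  have hjk : j = k := by
    by_contra hne
    have e := h1.symm.trans h3
    have e1 := DFunLike.congr_fun e j
    have e2 := DFunLike.congr_fun e k
    simp [Finsupp.single_apply, hne, Ne.symm hne] at e1 e2
    have a1 := h4 j (by simp; omega)
    have a2 := h2 k (by simp; omega)
    exact hne (le_antisymm a2 a1)
  subst hjk
  have := h1.symm.trans h3
  simp_all

open Classical in
/-- approximations to the action -/
noncomputable def F : ℕ → (L →ₗ[K] MvPolynomial I K →ₗ[K] MvPolynomial I K)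
  | 0 => (LinearMap.mul K (MvPolynomial I K)).comp (lin b)
  | m + 1 => b.constr K fun i => (basisMonomials I K).constr K fun J =>
      if J.degree ≤ m then F m (b i) (monomial J 1) else
      if h : ∃ q, Split i J q then
        X i * monomial J 1
          + F m (b h.choose.1) (F m (b i) (monomial h.choose.2 1) - X i * monomial h.choose.2 1)
          + F m ⁅b i, b h.choose.1⁆ (monomial h.choose.2 1)
      else X i * monomial J 1

/-- the action -/
noncomputable def R : L →ₗ[K] MvPolynomial I K →ₗ[K] MvPolynomial I K :=
  b.constr K fun i => (basisMonomials I K).constr K fun J => F b J.degree (b i) (monomial J 1)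

lemma constr_mono {M : Type*} [AddCommGroup M] [Module K M] (f : (I →₀ ℕ) → M) (J : I →₀ ℕ) :
    (basisMonomials I K).constr K f (monomial J 1) = f J := by
  have := (basisMonomials I K).constr_basis K f J
  rwa [coe_basisMonomials] at this

/-- Linear maps in two variables agreeing on basis elements. -/
lemma mem_of_basis {M : Type*} [AddCommGroup M] [Module K M] (N : Submodule K M)
    (f : L →ₗ[K] MvPolynomial I K →ₗ[K] M) {d : ℕ}
    (h : ∀ i J, J.degree ≤ d → f (b i) (monomial J 1) ∈ N) (x : L) {p : MvPolynomial I K}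
    (hp : p ∈ Sle K I d) : f x p ∈ N := by
  induction hp using Submodule.span_induction with
  | zero => simp
  | add p q _ _ hp hq => rw [map_add]; exact add_mem hp hq
  | smul a p _ hp => rw [map_smul]; exact Submodule.smul_mem _ _ hp
  | mem p hp =>
    obtain ⟨J, hJ, rfl⟩ := hp
    induction x using basis_ind b with
    | zero => simp
    | add x y hx hy => rw [map_add, LinearMap.add_apply]; exact add_mem hx hy
    | smul a x hx => rw [map_smul, LinearMap.smul_apply]; exact Submodule.smul_mem _ _ hx
    | basis i => exact h i J hJ

lemma F_succ (m : ℕ) (x : L) {p : MvPolynomial I K} (hp : p ∈ Sle K I m) :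
    F b (m + 1) x p = F b m x p := by
  have := mem_of_basis b ⊥ (F b (m + 1) - F b m) (d := m) ?_ x hp
  · simpa [sub_eq_zero] using this
  · intro i J hJ
    simp only [LinearMap.sub_apply, Submodule.mem_bot, sub_eq_zero]
    rw [F, Module.Basis.constr_basis, constr_mono, if_pos hJ]

lemma F_le {m k : ℕ} (h : m ≤ k) (x : L) {p : MvPolynomial I K} (hp : p ∈ Sle K I m) :
    F b k x p = F b m x p := by
  induction k, h using Nat.le_induction with
  | base => rfl
  | succ k hk ih => rw [F_succ b k x (Sle_mono hk hp), ih]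

lemma R_eq (m : ℕ) (x : L) {p : MvPolynomial I K} (hp : p ∈ Sle K I m) :
    R b x p = F b m x p := by
  have := mem_of_basis b ⊥ (R b - F b m) (d := m) ?_ x hp
  · simpa [sub_eq_zero] using this
  · intro i J hJ
    simp only [LinearMap.sub_apply, Submodule.mem_bot, sub_eq_zero]
    rw [R, Module.Basis.constr_basis, constr_mono, F_le b hJ]
    exact mono_mem le_rfl

lemma Split.degree {i : I} {J : I →₀ ℕ} {q : I × (I →₀ ℕ)} (hq : Split i J q) :
    J.degree = q.2.degree + 1 := by
  rw [hq.1]; simp [add_comm]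

lemma F_sub_mem (m : ℕ) : ∀ {d : ℕ}, d ≤ m → ∀ (x : L) {p : MvPolynomial I K}, p ∈ Sle K I d →
    F b m x p - lin b x * p ∈ Sle K I d := by
  induction m with
  | zero => intro d _ x p _; simp [F]
  | succ m ih =>
    intro d hd x p hp
    refine mem_of_basis b (Sle K I d)
      (F b (m + 1) - (LinearMap.mul K (MvPolynomial I K)).comp (lin b)) (d := d) ?_ x hp
    intro i J hJ
    simp only [LinearMap.sub_apply, LinearMap.comp_apply, LinearMap.mul_apply', lin_b]
    by_cases hJm : J.degree ≤ m
    · rw [F_succ b m _ (mono_mem hJm), ← lin_b b]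
      exact Sle_mono hJ (ih hJm _ (mono_mem le_rfl))
    rw [F, Module.Basis.constr_basis, constr_mono, if_neg hJm]
    split_ifs with h
    · have hs := h.choose_spec.degree
      generalize h.choose = q at *
      have key : ∀ (y : L) {r : MvPolynomial I K}, r ∈ Sle K I q.2.degree →
          F b m y r ∈ Sle K I d := by
        intro y r hr
        have h1 := ih (by omega) y hr
        have h2 := lin_mul_mem b y hr
        have := add_mem (Sle_mono (Nat.le_succ _) h1) h2
        rw [sub_add_cancel] at this
        exact Sle_mono (by omega) this
      rw [add_assoc, add_sub_cancel_left]
      refine add_mem (key _ ?_) (key _ (mono_mem le_rfl))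
      rw [← lin_b b]
      exact ih (by omega) _ (mono_mem le_rfl)
    · simp

lemma R_sub_mem {d : ℕ} (x : L) {p : MvPolynomial I K} (hp : p ∈ Sle K I d) :
    R b x p - lin b x * p ∈ Sle K I d := by
  rw [R_eq b d x hp]; exact F_sub_mem b d le_rfl x hp

lemma R_mem {d : ℕ} (x : L) {p : MvPolynomial I K} (hp : p ∈ Sle K I d) :
    R b x p ∈ Sle K I (d + 1) := by
  have := add_mem (Sle_mono (Nat.le_succ _) (R_sub_mem b x hp)) (lin_mul_mem b x hp)
  rwa [sub_add_cancel] at this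

lemma R_of_le (i : I) (J : I →₀ ℕ) (h : ∀ k ∈ J.support, i ≤ k) :
    R b (b i) (monomial J 1) = X i * monomial J 1 := by
  rw [R_eq b J.degree _ (mono_mem le_rfl)]
  cases hd : J.degree with
  | zero => simp [F]
  | succ m =>
    rw [F, Module.Basis.constr_basis, constr_mono, if_neg (by omega), dif_neg]
    rintro ⟨q, h1, h2, h3⟩
    refine absurd (h q.1 ?_) (not_le.2 h2)
    rw [h1]; simp

lemma R_comm_of_lt (i j : I) (M : I →₀ ℕ) (hji : j < i) (h : ∀ k ∈ M.support, j ≤ k) :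
    R b (b i) (R b (b j) (monomial M 1)) =
      R b (b j) (R b (b i) (monomial M 1)) + R b ⁅b i, b j⁆ (monomial M 1) := by
  have hs : Split i (Finsupp.single j 1 + M) (j, M) := ⟨rfl, hji, h⟩
  have hM : (monomial M 1 : MvPolynomial I K) ∈ Sle K I M.degree := mono_mem le_rfl
  rw [R_of_le b j M h, X_mul_mono, R_eq b (M.degree + 1) (b i) (mono_mem (by simp [add_comm])), F,
    Module.Basis.constr_basis, constr_mono, if_neg (by simp),
    dif_pos ⟨_, hs⟩]
  have hex : ∃ q, Split i (Finsupp.single j 1 + M) q := ⟨_, hs⟩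
  have hc : hex.choose = (j, M) := hex.choose_spec.unique hs
  rw [hc]
  simp only
  rw [← R_eq b M.degree (b i) hM, ← R_eq b M.degree ⁅b i, b j⁆ hM, ← R_eq b M.degree]
  · rw [map_sub, X_mul_mono i M, R_of_le b j (Finsupp.single i 1 + M), ← X_mul_mono i M,
      ← X_mul_mono j M]
    · ring
    · intro k hk
      have := Finsupp.support_add hk
      rw [Finset.mem_union] at this
      rcases this with h' | h'
      · have := Finsupp.support_single_subset h'
        simp at this; subst this; exact hji.le
      · exact h k h'
  · rw [← lin_b b]; exact R_sub_mem b _ hM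


lemma step {d : ℕ} (IH : ∀ e < d, ∀ (x y : L) {p : MvPolynomial I K}, p ∈ Sle K I e →
    R b x (R b y p) - R b y (R b x p) = R b ⁅x, y⁆ p) (i j : I) (J : I →₀ ℕ) (hJ : J.degree ≤ d)
    (h : ∃ k ∈ J.support, k < i ∧ k < j) :
    R b (b i) (R b (b j) (monomial J 1)) - R b (b j) (R b (b i) (monomial J 1))
        = R b ⁅b i, b j⁆ (monomial J 1) := by
  obtain ⟨k, M, rfl, hki, hkj, hkM⟩ : ∃ k M, J = Finsupp.single k 1 + M ∧ k < i ∧ k < j ∧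
      ∀ l ∈ M.support, k ≤ l := by
    obtain ⟨k, hk, hki, hkj⟩ := h
    have hn : J.support.Nonempty := ⟨k, hk⟩
    have hm : J.support.min' hn ≤ k := Finset.min'_le _ _ hk
    have hmem := Finset.min'_mem _ hn
    refine ⟨J.support.min' hn, J - Finsupp.single (J.support.min' hn) 1, ?_, hm.trans_lt hki,
      hm.trans_lt hkj, ?_⟩
    · rw [add_tsub_cancel_of_le]
      rw [Finsupp.single_le_iff]
      rw [Finsupp.mem_support_iff] at hmem
      omega
    · intro l hl
      apply Finset.min'_le
      exact Finsupp.support_mono tsub_le_self hl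
  have hMd : M.degree < d := by simp at hJ; omega
  have hM : (monomial M 1 : MvPolynomial I K) ∈ Sle K I M.degree := mono_mem le_rfl
  rw [← X_mul_mono, ← R_of_le b k M hkM]
  have aux : ∀ i' j' : I, k < i' → k < j' → 
      R b (b i') (R b (b k) (R b (b j') (monomial M 1))) =
        R b (b k) (R b (b i') (R b (b j') (monomial M 1))) +
        R b ⁅b i', b k⁆ (R b (b j') (monomial M 1)) := by
    intro i' j' hi' hj'
    have h1 := R_sub_mem b (b j') hM
    rw [lin_b] at h1
    have h2 := IH _ hMd (b i') (b k) h1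
    have h3 := R_comm_of_lt b i' k (Finsupp.single j' 1 + M) hi' (by
      intro l hl
      have := Finsupp.support_add hl
      rw [Finset.mem_union] at this
      rcases this with h' | h'
      · have := Finsupp.support_single_subset h'
        simp at this; subst this; exact hj'.le
      · exact hkM l h')
    rw [← X_mul_mono] at h3
    simp only [map_sub] at h2
    rw [h3] at h2
    linear_combination (exp := 1) h2
  have c1 := IH _ hMd (b j) (b k) hM
  have c2 := IH _ hMd (b i) (b k) hM
  have c3 := IH _ hMd (b i) (b j) hM
  have c4 := IH _ hMd (b i) ⁅b j, b k⁆ hM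
  have c5 := IH _ hMd (b j) ⁅b i, b k⁆ hM
  have c6 := IH _ hMd ⁅b i, b j⁆ (b k) hM
  have a1 := aux i j hki hkj
  have a2 := aux j i hkj hki
  have d1 := congrArg (R b (b i)) c1
  have d2 := congrArg (R b (b j)) c2
  have d3 := congrArg (R b (b k)) c3
  have jac : R b ⁅b i, ⁅b j, b k⁆⁆ (monomial M 1) - R b ⁅b j, ⁅b i, b k⁆⁆ (monomial M 1)
      = R b ⁅⁅b i, b j⁆, b k⁆ (monomial M 1) := by
    rw [← LinearMap.sub_apply, ← map_sub, lie_lie]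
  simp only [map_sub] at d1 d2 d3
  linear_combination (exp := 1) d1 - d2 + d3 + c4 - c5 - c6 + a1 - a2 + jac

lemma R_comm (d : ℕ) : ∀ (x y : L) {p : MvPolynomial I K}, p ∈ Sle K I d →
    R b x (R b y p) - R b y (R b x p) = R b ⁅x, y⁆ p := by
  induction d using Nat.strong_induction_on with
  | _ d IH =>
  have main : ∀ (i j : I) (J : I →₀ ℕ), J.degree ≤ d →
      R b (b i) (R b (b j) (monomial J 1)) - R b (b j) (R b (b i) (monomial J 1))
        = R b ⁅b i, b j⁆ (monomial J 1) := by
    intro i j J hJ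
    rcases lt_trichotomy i j with hij | rfl | hij
    · by_cases h : ∀ k ∈ J.support, i ≤ k
      · rw [R_comm_of_lt b j i J hij h, ← lie_skew (b i) (b j), map_neg, LinearMap.neg_apply]
        abel
      · exact step b IH i j J hJ (by push Not at h; obtain ⟨k, h1, h2⟩ := h; exact ⟨k, h1, h2, h2.trans hij⟩)
    · simp
    · by_cases h : ∀ k ∈ J.support, j ≤ k
      · rw [R_comm_of_lt b i j J hij h]
        simp
      · exact step b IH i j J hJ (by push Not at h; obtain ⟨k, h1, h2⟩ := h; exact ⟨k, h1, h2.trans hij, h2⟩)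
  intro x y p hp
  induction hp using Submodule.span_induction with
  | zero => simp
  | add p q _ _ hp hq => simp only [map_add]; rw [← hp, ← hq]; abel
  | smul a p _ hp => simp only [map_smul]; rw [← hp, smul_sub]
  | mem p hp =>
    obtain ⟨J, hJ, rfl⟩ := hp
    induction x using basis_ind b with
    | zero => simp
    | add x x' hx hx' => 
      simp only [map_add, add_lie, LinearMap.add_apply]; rw [← hx, ← hx']; abel
    | smul a x hx => simp only [map_smul, smul_lie, LinearMap.smul_apply]; rw [← hx, smul_sub]
    | basis i =>
      induction y using basis_ind b with
      | zero => simp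
      | add x x' hx hx' => 
        simp only [map_add, lie_add, LinearMap.add_apply]; rw [← hx, ← hx']; abel
      | smul a x hx => simp only [map_smul, lie_smul, LinearMap.smul_apply]; rw [← hx, smul_sub]
      | basis j => exact main i j J hJ

attribute [local instance] LieRing.ofAssociativeRing

/-- the action as a Lie algebra map -/
noncomputable def RL : L →ₗ⁅K⁆ Module.End K (MvPolynomial I K) :=
  { (R b : L →ₗ[K] Module.End K (MvPolynomial I K)) with
    map_lie' := by
      intro x y
      apply (basisMonomials I K).ext
      intro J
      rw [coe_basisMonomials]
      exact (R_comm b J.degree x y (mono_mem le_rfl)).symm }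

/-- evaluation at the unit -/
noncomputable def ev : UniversalEnvelopingAlgebra K L →ₗ[K] MvPolynomial I K :=
  (LinearMap.applyₗ (1 : MvPolynomial I K)).comp
    (UniversalEnvelopingAlgebra.lift K (RL b)).toLinearMap

lemma ev_one : ev b 1 = 1 := by simp [ev]

lemma ev_mul (x : L) (u : UniversalEnvelopingAlgebra K L) :
    ev b (UniversalEnvelopingAlgebra.ι K x * u) = R b x (ev b u) := by
  simp only [ev, LinearMap.comp_apply, AlgHom.toLinearMap_apply, map_mul,
    UniversalEnvelopingAlgebra.lift_ι_apply]
  rfl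

lemma ev_list_mem (l : List L) :
    ev b (l.map fun x => (UniversalEnvelopingAlgebra.ι K x :
      UniversalEnvelopingAlgebra K L)).prod ∈ Sle K I l.length := by
  induction l with
  | nil => 
    simp only [List.map_nil, List.prod_nil, ev_one]
    exact mono_mem (by simp)
  | cons x l ih =>
    rw [List.map_cons, List.prod_cons, ev_mul]
    exact R_mem b x ih

lemma ev_list_sub_mem (x : L) (l : List L) :
    ev b ((x :: l).map fun x => (UniversalEnvelopingAlgebra.ι K x :
      UniversalEnvelopingAlgebra K L)).prod - ((x :: l).map (lin b)).prod
      ∈ Sle K I l.length := by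
  induction l generalizing x with
  | nil =>
    simp only [List.map_cons, List.map_nil, List.prod_cons, List.prod_nil, ev_mul, ev_one]
    exact R_sub_mem b x (mono_mem (by simp))
  | cons y l ih =>
    rw [List.map_cons, List.prod_cons, ev_mul, List.map_cons, List.prod_cons]
    have h1 := R_sub_mem b x (ev_list_mem b (y :: l))
    have h2 := lin_mul_mem b x (ih y)
    have := add_mem h1 h2
    rw [mul_sub] at this
    simpa using this

end action

section main
variable {K L : Type*} [Field K] [LieRing L] [LieAlgebra K L]

/-- product of a list in the enveloping algebra -/
def up (K : Type*) {L : Type*} [Field K] [LieRing L] [LieAlgebra K L] (l : List L) :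
    UniversalEnvelopingAlgebra K L :=
  (l.map fun x => (UniversalEnvelopingAlgebra.ι K x : UniversalEnvelopingAlgebra K L)).prod

lemma ofFn_eq_up {m : ℕ} (f : Fin m → L) : (List.ofFn fun i =>
      (UniversalEnvelopingAlgebra.ι K (f i) : UniversalEnvelopingAlgebra K L)).prod =
    up K (List.ofFn f) := by
  rw [up, List.map_ofFn]; rfl

lemma filt_eq (n : ℕ) : ueaFiltration K L n =
    Submodule.span K {x | ∃ l : List L, l.length ≤ n ∧ x = up K l} := by
  unfold ueaFiltration
  congr 1
  ext x
  constructor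
  · rintro ⟨m, f, hm, rfl⟩
    exact ⟨List.ofFn f, by simpa using hm, ofFn_eq_up f⟩
  · rintro ⟨l, hl, rfl⟩
    exact ⟨l.length, l.get, hl, by rw [ofFn_eq_up, List.ofFn_get]⟩

lemma up_mem {n : ℕ} {l : List L} (h : l.length ≤ n) : up K l ∈ ueaFiltration K L n := by
  rw [filt_eq]; exact Submodule.subset_span ⟨l, h, rfl⟩

lemma filt_mono {m n : ℕ} (h : m ≤ n) : ueaFiltration K L m ≤ ueaFiltration K L n := by
  rw [filt_eq, filt_eq]
  apply Submodule.span_mono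
  rintro x ⟨l, hl, rfl⟩
  exact ⟨l, hl.trans h, rfl⟩

lemma up_cons (x : L) (l : List L) :
    up K (x :: l) = UniversalEnvelopingAlgebra.ι K x * up K l := by
  simp [up]

lemma iota_mul_mem (x : L) {n : ℕ} {u : UniversalEnvelopingAlgebra K L}
    (hu : u ∈ ueaFiltration K L n) :
    UniversalEnvelopingAlgebra.ι K x * u ∈ ueaFiltration K L (n + 1) := by
  rw [filt_eq] at hu
  induction hu using Submodule.span_induction with
  | zero => simp
  | add p q _ _ hp hq => rw [mul_add]; exact add_mem hp hq
  | smul a p _ hp => rw [mul_smul_comm]; exact Submodule.smul_mem _ _ hp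
  | mem p hp =>
    obtain ⟨l, hl, rfl⟩ := hp
    rw [← up_cons]
    exact up_mem (by simpa using hl)

attribute [local instance] LieRing.ofAssociativeRing

lemma up_perm {l₁ l₂ : List L} (h : l₁.Perm l₂) : ∀ n, l₁.length = n + 1 →
    up K l₁ - up K l₂ ∈ ueaFiltration K L n := by
  induction h with
  | nil => intro n _; simp
  | @cons x l₁ l₂ h ih =>
    intro n hn
    rw [up_cons, up_cons, ← mul_sub]
    cases n with
    | zero =>
      obtain rfl : l₁ = [] := by simpa using hn
      obtain rfl : l₂ = [] := by simpa using h
      simp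
    | succ n => exact iota_mul_mem x (ih n (by simpa using hn))
  | swap x y l =>
    intro n hn
    have : up K (y :: x :: l) - up K (x :: y :: l) = up K (⁅y, x⁆ :: l) := by
      simp only [up_cons, LieHom.map_lie, LieRing.of_associative_ring_bracket]
      noncomm_ring
    rw [this]
    apply up_mem
    simp at hn ⊢; omega
  | trans h₁ _ ih₁ ih₂ =>
    intro n hn
    have := add_mem (ih₁ n hn) (ih₂ n (h₁.length_eq ▸ hn))
    simpa using this

/-- products as a multilinear map -/
noncomputable def upM (K L : Type*) [Field K] [LieRing L] [LieAlgebra K L] (n : ℕ) :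
    MultilinearMap K (fun _ : Fin n => L) (UniversalEnvelopingAlgebra K L) :=
  (MultilinearMap.mkPiAlgebraFin K n (UniversalEnvelopingAlgebra K L)).compLinearMap
    fun _ => (UniversalEnvelopingAlgebra.ι K : L →ₗ⁅K⁆ UniversalEnvelopingAlgebra K L)

lemma upM_apply (n : ℕ) (f : Fin n → L) : upM K L n f = up K (List.ofFn f) := by
  rw [← ofFn_eq_up]; simp [upM]

/-- the map from the symmetric power to the graded piece -/
noncomputable def H (K L : Type*) [Field K] [LieRing L] [LieAlgebra K L] (n : ℕ) :
    (TensorPower K (n + 1) L ⧸ symRelSpan K L n) →ₗ[K]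
      (UniversalEnvelopingAlgebra K L ⧸ ueaFiltration K L n) :=
  (symRelSpan K L n).liftQ
    ((ueaFiltration K L n).mkQ.comp (PiTensorProduct.lift (upM K L (n + 1)))) (by
      rw [symRelSpan, Submodule.span_le]
      rintro x ⟨σ, f, rfl⟩
      simp only [SetLike.mem_coe, LinearMap.mem_ker, LinearMap.comp_apply, map_sub,
        PiTensorProduct.lift.tprod, upM_apply]
      rw [← map_sub, Submodule.mkQ_apply, Submodule.Quotient.mk_eq_zero]
      exact up_perm (Equiv.Perm.ofFn_comp_perm σ f).symm n (by simp))

lemma H_mk (n : ℕ) (f : Fin (n + 1) → L) :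
    H K L n (Submodule.Quotient.mk (PiTensorProduct.tprod K f)) =
      Submodule.Quotient.mk (up K (List.ofFn f)) := by
  simp only [H]
  erw [Submodule.liftQ_apply]
  simp [upM_apply]

variable {I : Type*} [LinearOrder I] (b : Module.Basis I K L)

open Classical in
/-- projection of polynomials to the symmetric power -/
noncomputable def pr (n : ℕ) :
    MvPolynomial I K →ₗ[K] (TensorPower K (n + 1) L ⧸ symRelSpan K L n) :=
  (basisMonomials I K).constr K fun J =>
    if h : ∃ v : Fin (n + 1) → I, J = ∑ k, Finsupp.single (v k) 1 then
      Submodule.Quotient.mk (PiTensorProduct.tprod K (fun k => b (h.choose k))) else 0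

lemma pr_low (n : ℕ) {p : MvPolynomial I K} (hp : p ∈ Sle K I n) : pr b n p = 0 := by
  induction hp using Submodule.span_induction with
  | zero => simp
  | add p q _ _ hp hq => rw [map_add, hp, hq, add_zero]
  | smul a p _ hp => rw [map_smul, hp, smul_zero]
  | mem p hp =>
    obtain ⟨J, hJ, rfl⟩ := hp
    rw [pr, constr_mono, dif_neg]
    rintro ⟨v, rfl⟩
    simp at hJ

lemma exists_perm {n : ℕ} (v w : Fin n → I)
    (h : ∑ k, Finsupp.single (v k) 1 = ∑ k, (Finsupp.single (w k) 1 : I →₀ ℕ)) :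
    ∃ σ : Equiv.Perm (Fin n), v = w ∘ σ := by
  have hc : ∀ c : I, Nonempty ({a // v a = c} ≃ {a // w a = c}) := by
    intro c
    have := DFunLike.congr_fun h c
    simp only [Finsupp.finsetSum_apply, Finsupp.single_apply, Finset.sum_boole, Nat.cast_id] at this
    rw [← Fintype.card_eq, Fintype.card_subtype, Fintype.card_subtype]
    exact this
  let e := fun c => (hc c).some
  refine ⟨Equiv.ofFiberEquiv e, ?_⟩
  funext k
  exact (Equiv.ofFiberEquiv_map e k).symm

lemma tprod_perm {n : ℕ} (f : Fin (n + 1) → L) (σ : Equiv.Perm (Fin (n + 1))) :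
    (Submodule.Quotient.mk (PiTensorProduct.tprod K (f ∘ σ)) :
      TensorPower K (n + 1) L ⧸ symRelSpan K L n) =
    Submodule.Quotient.mk (PiTensorProduct.tprod K f) := by
  symm
  rw [Submodule.Quotient.eq]
  exact Submodule.subset_span ⟨σ, f, rfl⟩

lemma pr_X (n : ℕ) (v : Fin (n + 1) → I) :
    pr b n (∏ k, X (v k)) =
      Submodule.Quotient.mk (PiTensorProduct.tprod K (fun k => b (v k))) := by
  have e : (∏ k, X (v k) : MvPolynomial I K) = monomial (∑ k, Finsupp.single (v k) 1) 1 := by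
    rw [monomial_sum_one]; rfl
  have hex : ∃ w : Fin (n + 1) → I, ∑ k, Finsupp.single (v k) 1 =
    ∑ k, (Finsupp.single (w k) 1 : I →₀ ℕ) := ⟨v, rfl⟩
  rw [e, pr, constr_mono, dif_pos hex]
  obtain ⟨σ, hσ⟩ := exists_perm _ _ hex.choose_spec
  rw [← tprod_perm _ σ]
  congr 2
  funext k
  simp only [Function.comp]
  conv_rhs => rw [hσ]
  rfl

lemma pr_lin (n : ℕ) (f : Fin (n + 1) → L) :
    pr b n ((List.ofFn f).map (lin b)).prod =
      Submodule.Quotient.mk (PiTensorProduct.tprod K f) := by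
  have : (pr b n).compMultilinearMap
      ((MultilinearMap.mkPiAlgebra K (Fin (n + 1)) (MvPolynomial I K)).compLinearMap
        fun _ => lin b) =
      (symRelSpan K L n).mkQ.compMultilinearMap (PiTensorProduct.tprod K) := by
    apply Module.Basis.ext_multilinear (fun _ => b)
    intro v
    simpa using pr_X b n v
  have := congrArg (fun m => m f) this
  rw [List.map_ofFn, List.prod_ofFn]
  simpa using this

lemma g_up (n : ℕ) (f : Fin (n + 1) → L) : pr b n (ev b (up K (List.ofFn f))) =
    Submodule.Quotient.mk (PiTensorProduct.tprod K f) := by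
  rw [← pr_lin b n f, ← sub_eq_zero, ← map_sub]
  apply pr_low
  rw [List.ofFn_succ, up]
  have := ev_list_sub_mem b (f 0) (List.ofFn fun i : Fin n => f i.succ)
  rwa [List.length_ofFn] at this

lemma g_low (n : ℕ) {u : UniversalEnvelopingAlgebra K L} (hu : u ∈ ueaFiltration K L n) :
    pr b n (ev b u) = 0 := by
  rw [filt_eq] at hu
  induction hu using Submodule.span_induction with
  | zero => simp
  | add p q _ _ hp hq => rw [map_add, map_add, hp, hq, add_zero]
  | smul a p _ hp => rw [map_smul, map_smul, hp, smul_zero]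
  | mem p hp =>
    obtain ⟨l, hl, rfl⟩ := hp
    exact pr_low b n (Sle_mono hl (ev_list_mem b l))

lemma H_g (n : ℕ) {u : UniversalEnvelopingAlgebra K L} (hu : u ∈ ueaFiltration K L (n + 1)) :
    H K L n (pr b n (ev b u)) = Submodule.Quotient.mk u := by
  rw [filt_eq] at hu
  induction hu using Submodule.span_induction with
  | zero => simp
  | add p q _ _ hp hq => simp only [map_add, hp, hq]; rfl
  | smul a p _ hp => simp only [map_smul, hp]; rfl
  | mem p hp =>
    obtain ⟨l, hl, rfl⟩ := hp
    rcases hl.lt_or_eq with h | h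
    · have hm : up K l ∈ ueaFiltration K L n := up_mem (by omega)
      rw [g_low b n hm, map_zero, eq_comm, Submodule.Quotient.mk_eq_zero]
      exact hm
    · obtain ⟨f, rfl⟩ : ∃ f : Fin (n + 1) → L, l = List.ofFn f := by
        exact ⟨fun i => l.get (i.cast h.symm), by rw [List.ofFn_congr h.symm]; simp⟩
      rw [g_up, H_mk]

end main
end PBWProof

/-- (Graded piece of the PBW filtration.)  For a Lie algebra `L` over a field of
characteristic zero, for each `n ≥ 0` there is a short exact sequence
`0 → U(L)^{≤n} → U(L)^{≤n+1} → S^{n+1}(L) → 0`, where the surjection sends the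
class of a product `ι(f 1)⋯ι(f (n+1))` to the class of `f 1 ⊗ ⋯ ⊗ f (n+1)` in the
symmetric power (coinvariants of the permutation action on the tensor power). -/
theorem pbw_graded_shortExact {K L : Type*} [Field K] [CharZero K]
    [LieRing L] [LieAlgebra K L] (n : ℕ) :
    ∃ g : ↥(ueaFiltration K L (n + 1)) →ₗ[K]
        (TensorPower K (n + 1) L ⧸ symRelSpan K L n),
      Function.Surjective g ∧
      LinearMap.ker g = (ueaFiltration K L n).comap (ueaFiltration K L (n + 1)).subtype ∧
      ∀ (f : Fin (n + 1) → L)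
        (hx : (List.ofFn fun i =>
          (UniversalEnvelopingAlgebra.ι K (f i) : UniversalEnvelopingAlgebra K L)).prod ∈
            ueaFiltration K L (n + 1)),
        g ⟨_, hx⟩ = Submodule.Quotient.mk (PiTensorProduct.tprod K f) := by
  classical
  let b := Module.Basis.ofVectorSpace K L
  let _ : LinearOrder (Module.Basis.ofVectorSpaceIndex K L) :=
    IsWellOrder.linearOrder WellOrderingRel
  refine ⟨((PBWProof.pr b n).comp (PBWProof.ev b)).comp (ueaFiltration K L (n + 1)).subtype,
    ?_, ?_, ?_⟩
  · rw [← LinearMap.range_eq_top, eq_top_iff]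
    rintro q -
    obtain ⟨t, rfl⟩ := Submodule.mkQ_surjective _ q
    induction t using PiTensorProduct.induction_on with
    | smul_tprod a f =>
      rw [map_smul]
      apply Submodule.smul_mem
      exact ⟨⟨_, PBWProof.up_mem (l := List.ofFn f) (by simp)⟩, PBWProof.g_up b n f⟩
    | add x y hx hy => rw [map_add]; exact add_mem hx hy
  · ext ⟨u, hu⟩
    simp only [LinearMap.mem_ker, LinearMap.comp_apply, Submodule.subtype_apply,
      Submodule.mem_comap]
    constructor
    · intro h
      have := PBWProof.H_g b n hu
      rw [h, map_zero, eq_comm, Submodule.Quotient.mk_eq_zero] at this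
      exact this
    · exact PBWProof.g_low b n
  · intro f hx
    rw [← PBWProof.g_up b n f, ← PBWProof.ofFn_eq_up]
    rfl
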